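/- Δ is an algebra homomorphism: Δ(b b') = Δ(b) Δ(b') for all b, b' ∈ B, where B ⊗ B carries the componentwise product. -/

import Mathlib

/-!
The proof rests on the action `b ▷ x = λ⁻¹ E_{M₁}(b x e₂)` of `B` on `M₁`, which preserves `A` and
satisfies `⟨b ▷ a, b'⟩ = ⟨a, b' b⟩`. If `b ▷ (a a') = (b₍₁₎ ▷ a)(b₍₂₎ ▷ a')`, then for `a, a' ∈ A`
`⟨a a', b b'⟩ = ⟨b' ▷ (a a'), b⟩ = ⟨b'₍₁₎ ▷ a, b₍₁₎⟩ ⟨b'₍₂₎ ▷ a', b₍₂₎⟩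
  = ⟨a, b₍₁₎ b'₍₁₎⟩ ⟨a', b₍₂₎ b'₍₂₎⟩`,
and multiplicativity of `Δ` follows because `A ⊗ A` separates the points of `B ⊗ B`
(`D2H.prT_nondeg`).

The module algebra property (`D2H.act_mul`) is a consequence of the commutation relation
`b a = (b₍₁₎ ▷ a) b₍₂₎` (`D2H.comm_rel`). To prove that relation, let `K(c) = ∑ xⱼ e₁ c yⱼ`; this
maps `C` to `B`, is right `B`-linear and satisfies `e₁ K(c) = e₁ c`. Non-degeneracy of the pairing
gives `⟨a, b₍₁₎⟩ b₍₂₎ = w⁻¹ K(w b a)` (`D2H.slice`). Replacing `a` by `a ṽ`, where `ṽ ∈ U` is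
determined by `e₁ ṽ = e₁ v` for `v ∈ V`, and summing over the dual bases `f⁽¹⁾ ⊗ w f⁽²⁾` of `T` on
`V` gives `K(w (b₍₁₎ ▷ a)) b₍₂₎ = K(w b a)`, hence the commutation relation multiplied by `e₁ w` on
the left (`D2H.e1_comm`). By depth two `M₁ = A M`, so the latter also holds for `m a` with `m ∈ M`
in place of `a`, and `e₁ w` can be replaced by `e₁ m w`; finally `∑ xⱼ e₁ yⱼ = 1` and `w` is
invertible.
-/

open scoped TensorProduct
open TensorProduct

/-- A symmetric Markov extension `N ⊆ M` of `k`-algebras satisfying the symmetric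
product and weak irreducibility assumptions, together with its Jones tower
`N ⊆ M ⊆ M₁ ⊆ M₂` (the ambient algebra `R` plays the role of `M₂`), the
normalized trace `T = T₂` and the depth two conditions. -/
structure D2 (k : Type*) [Field k] (R : Type*) [Ring R] [Algebra k R] where
  N : Subalgebra k R
  M : Subalgebra k R
  M1 : Subalgebra k R
  hNM : N ≤ M
  hMM1 : M ≤ M1
  E : R →ₗ[k] R
  EM : R →ₗ[k] R
  EM1 : R →ₗ[k] R
  lam : k
  lam_ne : lam ≠ 0
  e1 : R
  e2 : R
  T : R →ₗ[k] k
  -- Markov extension data for E : M → N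
  nE : ℕ
  xb : Fin nE → R
  yb : Fin nE → R
  hxb : ∀ i, xb i ∈ M
  hyb : ∀ i, yb i ∈ M
  hE_mem : ∀ x ∈ M, E x ∈ N
  hE_one : E 1 = 1
  hE_left : ∀ n ∈ N, ∀ x ∈ M, E (n * x) = n * E x
  hE_right : ∀ n ∈ N, ∀ x ∈ M, E (x * n) = E x * n
  hdual1 : ∀ m ∈ M, ∑ i, E (m * xb i) * yb i = m
  hdual2 : ∀ m ∈ M, ∑ i, xb i * E (yb i * m) = m
  hindex : ∑ i, xb i * yb i = lam⁻¹ • (1 : R)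
  hindex' : ∑ i, yb i * xb i = lam⁻¹ • (1 : R)
  -- the normalized trace (T₂ on M₂ = R; it restricts to T on N, T₀ on M, T₁ on M₁)
  hT_one : T 1 = 1
  hT_tr : ∀ x y : R, T (x * y) = T (y * x)
  hTE : ∀ x ∈ M, T (E x) = T x
  hTEM : ∀ x ∈ M1, T (EM x) = T x
  hTEM1 : ∀ x : R, T (EM1 x) = T x
  -- symmetry of the Markov extension: E u = u E for all u ∈ U = C_M(N)
  hsymm : ∀ u ∈ M, (∀ y ∈ N, u * y = y * u) → ∀ x ∈ M, E (u * x) = E (x * u)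
  -- the basic construction M₁ = M e₁ M
  he1_mem : e1 ∈ M1
  he1_idem : e1 * e1 = e1
  he1_N : ∀ y ∈ N, e1 * y = y * e1
  hM1_gen : M1.toSubmodule = Submodule.span k {z : R | ∃ m ∈ M, ∃ m' ∈ M, z = m * e1 * m'}
  hEM_mem : ∀ x ∈ M1, EM x ∈ M
  hEM_one : EM 1 = 1
  hEM_left : ∀ m ∈ M, ∀ x ∈ M1, EM (m * x) = m * EM x
  hEM_right : ∀ m ∈ M, ∀ x ∈ M1, EM (x * m) = EM x * m
  hEM_e1 : ∀ m ∈ M, ∀ m' ∈ M, EM (m * e1 * m') = lam • (m * m')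
  he1_jones : ∀ x ∈ M, e1 * x * e1 = e1 * E x
  he1_jones' : ∀ x ∈ M, e1 * E x = E x * e1
  -- the iterated basic construction M₂ = M₁ e₂ M₁ (M₂ = R is the ambient algebra)
  he2_idem : e2 * e2 = e2
  he2_M : ∀ m ∈ M, e2 * m = m * e2
  hM2_gen : (⊤ : Submodule k R) = Submodule.span k {z : R | ∃ x ∈ M1, ∃ y ∈ M1, z = x * e2 * y}
  hEM1_mem : ∀ x : R, EM1 x ∈ M1
  hEM1_one : EM1 1 = 1
  hEM1_left : ∀ m ∈ M1, ∀ x : R, EM1 (m * x) = m * EM1 x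
  hEM1_right : ∀ m ∈ M1, ∀ x : R, EM1 (x * m) = EM1 x * m
  hEM1_e2 : ∀ x ∈ M1, ∀ y ∈ M1, EM1 (x * e2 * y) = lam • (x * y)
  he2_jones : ∀ x ∈ M1, e2 * x * e2 = e2 * EM x
  he2_jones' : ∀ x ∈ M1, e2 * EM x = EM x * e2
  -- braid-like relations and Pimsner-Popa relations
  hbraid1 : e1 * e2 * e1 = lam • e1
  hbraid2 : e2 * e1 * e2 = lam • e2
  hPP1 : ∀ x ∈ M1, x * e1 = lam⁻¹ • (EM (x * e1) * e1)
  hPP1' : ∀ x ∈ M1, e1 * x = lam⁻¹ • (e1 * EM (e1 * x))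
  hPP2 : ∀ x : R, x * e2 = lam⁻¹ • (EM1 (x * e2) * e2)
  hPP2' : ∀ x : R, e2 * x = lam⁻¹ • (e2 * EM1 (e2 * x))
  -- weak irreducibility: U = C_M(N) is Kanzaki separable with symmetric
  -- separability element ∑ sp i ⊗ sq i, and T₀ = T|U is non-degenerate on U
  nS : ℕ
  sp : Fin nS → R
  sq : Fin nS → R
  hsp : ∀ i, sp i ∈ M ∧ ∀ y ∈ N, sp i * y = y * sp i
  hsq : ∀ i, sq i ∈ M ∧ ∀ y ∈ N, sq i * y = y * sq i
  hsep_one : ∑ i, sp i * sq i = 1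
  hsep_cas : ∀ u ∈ M, (∀ y ∈ N, u * y = y * u) →
      ∑ i, (u * sp i) ⊗ₜ[k] sq i = ∑ i, sp i ⊗ₜ[k] (sq i * u)
  hsep_symm : ∑ i, sp i ⊗ₜ[k] sq i = ∑ i, sq i ⊗ₜ[k] sp i
  hU_nondeg : ∀ u ∈ M, (∀ y ∈ N, u * y = y * u) →
      (∀ u' ∈ M, (∀ y ∈ N, u' * y = y * u') → T (u * u') = 0) → u = 0
  -- depth two conditions
  nA : ℕ
  zb : Fin nA → R
  wb : Fin nA → R
  hzb : ∀ j, zb j ∈ M1 ∧ ∀ y ∈ N, zb j * y = y * zb j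
  hwb : ∀ j, wb j ∈ M1 ∧ ∀ y ∈ N, wb j * y = y * wb j
  hdualA1 : ∀ x ∈ M1, ∑ j, EM (x * zb j) * wb j = x
  hdualA2 : ∀ x ∈ M1, ∑ j, zb j * EM (wb j * x) = x
  nB : ℕ
  ub : Fin nB → R
  vb : Fin nB → R
  hub : ∀ i, ∀ y ∈ M, ub i * y = y * ub i
  hvb : ∀ i, ∀ y ∈ M, vb i * y = y * vb i
  hdualB1 : ∀ x : R, ∑ i, EM1 (x * ub i) * vb i = x
  hdualB2 : ∀ x : R, ∑ i, ub i * EM1 (vb i * x) = x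

namespace D2

variable {k : Type*} [Field k] {R : Type*} [Ring R] [Algebra k R]

/-- `U = C_M(N)`. -/
def U (D : D2 k R) : Subalgebra k R := D.M ⊓ Subalgebra.centralizer k (D.N : Set R)

/-- `V = C_{M₁}(M)`. -/
def V (D : D2 k R) : Subalgebra k R := D.M1 ⊓ Subalgebra.centralizer k (D.M : Set R)

/-- `W = C_{M₂}(M₁)`. -/
def W (D : D2 k R) : Subalgebra k R := Subalgebra.centralizer k (D.M1 : Set R)

/-- `A = C_{M₁}(N)`. -/
def A (D : D2 k R) : Subalgebra k R := D.M1 ⊓ Subalgebra.centralizer k (D.N : Set R)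

/-- `B = C_{M₂}(M)`. -/
def B (D : D2 k R) : Subalgebra k R := Subalgebra.centralizer k (D.M : Set R)

/-- `C = C_{M₂}(N)`. -/
def C (D : D2 k R) : Subalgebra k R := Subalgebra.centralizer k (D.N : Set R)

end D2
/-- Extension of the depth two setting by the symmetric separability element
`f = ∑ f1 i ⊗ f2 i` of `V = C_{M₁}(M)` and the invertible central element `w` of `V`
such that `f⁽¹⁾ ⊗ w f⁽²⁾` is the dual bases tensor of the trace `T` on `V`. -/
structure D2S (k : Type*) [Field k] (R : Type*) [Ring R] [Algebra k R] extends D2 k R where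
  nV : ℕ
  f1 : Fin nV → R
  f2 : Fin nV → R
  hf1 : ∀ i, f1 i ∈ M1 ∧ ∀ y ∈ M, f1 i * y = y * f1 i
  hf2 : ∀ i, f2 i ∈ M1 ∧ ∀ y ∈ M, f2 i * y = y * f2 i
  hf_one : ∑ i, f1 i * f2 i = 1
  hf_cas : ∀ v ∈ M1, (∀ y ∈ M, v * y = y * v) →
      ∑ i, (v * f1 i) ⊗ₜ[k] f2 i = ∑ i, f1 i ⊗ₜ[k] (f2 i * v)
  hf_symm : ∑ i, f1 i ⊗ₜ[k] f2 i = ∑ i, f2 i ⊗ₜ[k] f1 i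
  w : R
  winv : R
  hw_mem : w ∈ M1 ∧ ∀ y ∈ M, w * y = y * w
  hwinv_mem : winv ∈ M1 ∧ ∀ y ∈ M, winv * y = y * winv
  hw_inv : w * winv = 1 ∧ winv * w = 1
  hw_central : ∀ v ∈ M1, (∀ y ∈ M, v * y = y * v) → w * v = v * w
  hw_def : w * (∑ i, T (f2 i) • f1 i) = 1
  hw_dual : ∀ v ∈ M1, (∀ y ∈ M, v * y = y * v) → ∑ i, T (v * (w * f2 i)) • f1 i = v
/-- Extension of the depth two setting by the comultiplication `Δ`, the counit
(given by `ε(b) = ⟨1, b⟩`) and the antipode `S` on `B = C_{M₂}(M)`, characterized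
through the non-degenerate pairing `⟨a, b⟩ = λ⁻² T(a e₂ e₁ w b)` of `A` and `B`. -/
structure D2H (k : Type*) [Field k] (R : Type*) [Ring R] [Algebra k R] extends D2S k R where
  Δ : R →ₗ[k] R ⊗[k] R
  S : R →ₗ[k] R
  hΔ_mem : ∀ b, (∀ y ∈ M, b * y = y * b) →
      Δ b ∈ Submodule.span k {z : R ⊗[k] R |
        ∃ b1, (∀ y ∈ M, b1 * y = y * b1) ∧ ∃ b2, (∀ y ∈ M, b2 * y = y * b2) ∧
          z = b1 ⊗ₜ[k] b2}
  hΔ_def : ∀ a1 ∈ M1, (∀ y ∈ N, a1 * y = y * a1) →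
    ∀ a2 ∈ M1, (∀ y ∈ N, a2 * y = y * a2) →
    ∀ b, (∀ y ∈ M, b * y = y * b) →
    ∀ (m : ℕ) (b1 b2 : Fin m → R), Δ b = ∑ i, b1 i ⊗ₜ[k] b2 i →
      ∑ i, (lam⁻¹ ^ 2 * T (a1 * e2 * e1 * w * b1 i)) *
          (lam⁻¹ ^ 2 * T (a2 * e2 * e1 * w * b2 i))
        = lam⁻¹ ^ 2 * T (a1 * a2 * e2 * e1 * w * b)
  hS_mem : ∀ b, (∀ y ∈ M, b * y = y * b) → ∀ y ∈ M, S b * y = y * S b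
  hS_bijOn : Set.BijOn S {b : R | ∀ y ∈ M, b * y = y * b} {b : R | ∀ y ∈ M, b * y = y * b}
  hS_def : ∀ a ∈ M1, (∀ y ∈ N, a * y = y * a) →
    ∀ b, (∀ y ∈ M, b * y = y * b) →
      lam⁻¹ ^ 2 * T (a * e2 * e1 * w * b) = lam⁻¹ ^ 2 * T (S b * e1 * e2 * w * a)

namespace D2H

variable {k : Type*} [Field k] {R : Type*} [Ring R] [Algebra k R]

/-- The duality pairing `⟨a, b⟩ = λ⁻² T(a e₂ e₁ w b)`. -/
def pr (D : D2H k R) (a b : R) : k := D.lam⁻¹ ^ 2 * D.T (a * D.e2 * D.e1 * D.w * b)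

/-- The counit `ε(b) = ⟨1, b⟩`. -/
def eps (D : D2H k R) (b : R) : k := D.pr 1 b

end D2H

open D2 D2H

namespace D2H

variable {k : Type*} [Field k] {R : Type*} [Ring R] [Algebra k R]

/-! ### Centralizers and definitions -/

/-- Membership in `B = C_{M₂}(M)`. -/
def InB (D : D2H k R) (x : R) : Prop := ∀ y ∈ D.M, x * y = y * x

/-- Membership in `C = C_{M₂}(N)`. -/
def InC (D : D2H k R) (x : R) : Prop := ∀ y ∈ D.N, x * y = y * x

/-- The map `K : C → B`, `K(c) = ∑ xⱼ e₁ c yⱼ`, a rescaled form of the conditional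
expectation of `C` onto `B` composed with left multiplication by `e₁`. It is written as a
linear map on the whole algebra, but is meaningful on `C` only. -/
def K (D : D2H k R) : R →ₗ[k] R :=
  ∑ j, LinearMap.mulLeft k (D.xb j * D.e1) ∘ₗ LinearMap.mulRight k (D.yb j)

/-- The action `b ▷ x = λ⁻¹ E_{M₁}(b x e₂)` of `B` on `M₁`. -/
def act (D : D2H k R) (b x : R) : R := D.lam⁻¹ • D.EM1 (b * x * D.e2)

variable (D : D2H k R)

lemma InB.inC {D : D2H k R} {x : R} (h : D.InB x) : D.InC x := fun y hy => h y (D.hNM hy)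

lemma InB.mul {D : D2H k R} {x y : R} (hx : D.InB x) (hy : D.InB y) : D.InB (x * y) := by
  intro m hm
  rw [mul_assoc, hy m hm, ← mul_assoc, hx m hm, mul_assoc]

lemma InC.mul {D : D2H k R} {x y : R} (hx : D.InC x) (hy : D.InC y) : D.InC (x * y) := by
  intro m hm
  rw [mul_assoc, hy m hm, ← mul_assoc, hx m hm, mul_assoc]

lemma InC.smul {D : D2H k R} {x : R} (r : k) (hx : D.InC x) : D.InC (r • x) := by
  intro m hm
  rw [smul_mul_assoc, mul_smul_comm, hx m hm]

lemma inC_e1 : D.InC D.e1 := D.he1_N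

lemma inC_e2 : D.InC D.e2 := fun y hy => D.he2_M y (D.hNM hy)

lemma inC_EM1 {x : R} (hx : D.InC x) : D.InC (D.EM1 x) := by
  intro y hy
  have hy1 := D.hMM1 (D.hNM hy)
  rw [← D.hEM1_right y hy1, ← D.hEM1_left y hy1, hx y hy]

lemma inB_EM1 {x : R} (hx : D.InB x) : D.InB (D.EM1 x) := by
  intro y hy
  have hy1 := D.hMM1 hy
  rw [← D.hEM1_right y hy1, ← D.hEM1_left y hy1, hx y hy]

lemma inC_EM {x : R} (h1 : x ∈ D.M1) (hx : D.InC x) : D.InC (D.EM x) := by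
  intro y hy
  have hy1 := D.hNM hy
  rw [← D.hEM_right y hy1 x h1, ← D.hEM_left y hy1 x h1, hx y hy]

lemma inB_w : D.InB D.w := D.hw_mem.2
lemma inB_winv : D.InB D.winv := D.hwinv_mem.2

/-! ### The map `K : C → B` -/

lemma K_apply (c : R) : D.K c = ∑ j, D.xb j * D.e1 * c * D.yb j := by
  simp [K, mul_assoc]

/-- The Jones idempotent satisfies `∑ xⱼ e₁ yⱼ = 1`: the left-hand side is a left unit for
`M e₁ M = M₁ ∋ 1`. -/
lemma sum_e1 : ∑ j, D.xb j * D.e1 * D.yb j = 1 := by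
  have key : ∀ z ∈ D.M1.toSubmodule, (∑ j, D.xb j * D.e1 * D.yb j) * z = z := by
    intro z hz
    rw [D.hM1_gen] at hz
    induction hz using Submodule.span_induction with
    | mem z hz =>
      obtain ⟨m, hm, m', hm', rfl⟩ := hz
      rw [Finset.sum_mul]
      conv_rhs => rw [← D.hdual2 m hm, Finset.sum_mul, Finset.sum_mul]
      refine Finset.sum_congr rfl fun j _ => ?_
      have h := D.he1_jones (D.yb j * m) (D.M.mul_mem (D.hyb j) hm)
      rw [D.he1_jones' _ (D.M.mul_mem (D.hyb j) hm)] at h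
      calc D.xb j * D.e1 * D.yb j * (m * D.e1 * m')
          = D.xb j * (D.e1 * (D.yb j * m) * D.e1) * m' := by simp only [mul_assoc]
        _ = _ := by rw [h]; simp only [mul_assoc]
    | zero => simp
    | add x y _ _ hx hy => rw [mul_add, hx, hy]
    | smul r x _ hx => rw [mul_smul_comm, hx]
  have := key 1 D.M1.one_mem
  rwa [mul_one] at this

lemma K_mul {b : R} (hb : D.InB b) (c : R) : D.K (c * b) = D.K c * b := by
  rw [K_apply, K_apply, Finset.sum_mul]
  refine Finset.sum_congr rfl fun j _ => ?_
  rw [mul_assoc _ _ b, ← hb _ (D.hyb j)]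
  simp only [mul_assoc]

lemma K_inB_self {b : R} (hb : D.InB b) : D.K b = b := by
  have h := D.K_mul hb 1
  rw [one_mul, K_apply D 1] at h
  simpa [D.sum_e1] using h

lemma K_congr {c c' : R} (h : D.e1 * c = D.e1 * c') : D.K c = D.K c' := by
  rw [K_apply, K_apply]
  refine Finset.sum_congr rfl fun j _ => ?_
  rw [mul_assoc (D.xb j), h, ← mul_assoc (D.xb j)]

/-- `K` maps `C` to `B`, by the Casimir property of the dual bases of `E`. -/
lemma K_inB {c : R} (hc : D.InC c) : D.InB (D.K c) := by
  intro m hm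
  rw [K_apply, Finset.sum_mul, Finset.mul_sum]
  symm
  calc ∑ j, m * (D.xb j * D.e1 * c * D.yb j)
      = ∑ j, ∑ i, D.xb i * D.E (D.yb i * (m * D.xb j)) * (D.e1 * c * D.yb j) := by
        refine Finset.sum_congr rfl fun j _ => ?_
        rw [← Finset.sum_mul, D.hdual2 _ (D.M.mul_mem hm (D.hxb j))]
        simp only [mul_assoc]
    _ = ∑ i, ∑ j, D.xb i * D.e1 * c * (D.E (D.yb i * m * D.xb j) * D.yb j) := by
        rw [Finset.sum_comm]
        refine Finset.sum_congr rfl fun i _ => Finset.sum_congr rfl fun j _ => ?_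
        have hE : D.E (D.yb i * m * D.xb j) ∈ D.N :=
          D.hE_mem _ (D.M.mul_mem (D.M.mul_mem (D.hyb i) hm) (D.hxb j))
        have h := (D.inC_e1.mul hc) _ hE
        rw [← mul_assoc (D.yb i)]
        calc _ = D.xb i * (D.E (D.yb i * m * D.xb j) * (D.e1 * c)) * D.yb j := by
              simp only [mul_assoc]
          _ = _ := by rw [← h]; simp only [mul_assoc]
    _ = ∑ i, D.xb i * D.e1 * c * D.yb i * m := by
        refine Finset.sum_congr rfl fun i _ => ?_
        rw [← Finset.mul_sum, D.hdual1 _ (D.M.mul_mem (D.hyb i) hm)]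
        simp only [mul_assoc]

/-- Every element of `e₁ C` has the form `e₁ b` with `b = K(c) ∈ B`. -/
lemma e1_K {c : R} (hc : D.InC c) : D.e1 * D.K c = D.e1 * c := by
  rw [K_apply, Finset.mul_sum]
  have h1 := D.hdual1 1 D.M.one_mem
  simp only [one_mul] at h1
  calc ∑ j, D.e1 * (D.xb j * D.e1 * c * D.yb j)
      = ∑ j, D.e1 * c * (D.E (D.xb j) * D.yb j) := by
        refine Finset.sum_congr rfl fun j _ => ?_
        calc _ = D.e1 * D.xb j * D.e1 * c * D.yb j := by simp only [mul_assoc]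
          _ = D.e1 * (D.E (D.xb j) * c) * D.yb j := by
            rw [D.he1_jones _ (D.hxb j)]; simp only [mul_assoc]
          _ = _ := by
            rw [← hc _ (D.hE_mem _ (D.hxb j))]; simp only [mul_assoc]
    _ = D.e1 * c := by rw [← Finset.mul_sum, h1, mul_one]

lemma T_K (c : R) : D.T (D.K c) = D.lam⁻¹ * D.T (D.e1 * c) := by
  rw [K_apply, map_sum]
  have : ∀ j, D.T (D.xb j * D.e1 * c * D.yb j) = D.T (D.yb j * D.xb j * (D.e1 * c)) := by
    intro j
    rw [D.hT_tr]; simp only [mul_assoc]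
  simp only [this]
  rw [← map_sum, ← Finset.sum_mul, D.hindex', smul_mul_assoc, one_mul, map_smul, smul_eq_mul]

lemma K_mem_M1 {c : R} (hc : c ∈ D.M1) : D.K c ∈ D.M1 := by
  rw [K_apply]
  exact Subalgebra.sum_mem _ fun j _ => D.M1.mul_mem (D.M1.mul_mem (D.M1.mul_mem
    (D.hMM1 (D.hxb j)) D.he1_mem) hc) (D.hMM1 (D.hyb j))

/-! ### Non-degeneracy of the trace and the pairing -/

/-- The trace is non-degenerate on `V = C_{M₁}(M)`. -/
lemma V_nondeg {v : R} (h1 : v ∈ D.M1) (hv : D.InB v)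
    (h : ∀ v' ∈ D.M1, D.InB v' → D.T (v * v') = 0) : v = 0 := by
  rw [← D.hw_dual v h1 hv]
  refine Finset.sum_eq_zero fun i _ => ?_
  rw [h _ (D.M1.mul_mem D.hw_mem.1 (D.hf2 i).1) (D.inB_w.mul (D.hf2 i).2), zero_smul]

/-- The trace is non-degenerate on `B`, by the depth two quasi-basis and
non-degeneracy on `V`. -/
lemma B_nondeg {b : R} (hb : D.InB b) (h : ∀ b', D.InB b' → D.T (b * b') = 0) : b = 0 := by
  rw [← D.hdualB1 b]
  refine Finset.sum_eq_zero fun i _ => ?_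
  rw [D.V_nondeg (D.hEM1_mem _) (D.inB_EM1 (hb.mul (D.hub i))), zero_mul]
  intro v' h1 hv'
  rw [← D.hEM1_right v' h1, D.hTEM1, mul_assoc]
  exact h _ (InB.mul (D.hub i) hv')

lemma w_cancel {x : R} (h : D.w * x = 0) : x = 0 := by
  rw [← one_mul x, ← D.hw_inv.2, mul_assoc, h, mul_zero]

/-- The pairing separates the points of `B`: for `b' ∈ B` the element
`a = E_{M₁}(b' e₁ e₂)` of `A` satisfies `⟨a, b⟩ = λ T(w b b')`. -/
lemma pr_nondeg {b : R} (hb : D.InB b)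
    (h : ∀ a ∈ D.M1, D.InC a → D.pr a b = 0) : b = 0 := by
  refine D.w_cancel (D.B_nondeg (D.inB_w.mul hb) fun b' hb' => ?_)
  have hl := D.lam_ne
  have ha := h _ (D.hEM1_mem (b' * D.e1 * D.e2))
    (D.inC_EM1 ((hb'.inC.mul D.inC_e1).mul D.inC_e2))
  have h2 : D.EM1 (b' * D.e1 * D.e2) * D.e2 = D.lam • (b' * D.e1 * D.e2) := by
    have := D.hPP2 (b' * D.e1)
    rw [this, smul_smul, mul_inv_cancel₀ hl, one_smul, ← this]
  have h3 : D.EM1 (b' * D.e1 * D.e2) * D.e2 * D.e1 * D.w * b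
      = D.lam ^ 2 • (b' * (D.e1 * (D.w * b))) := by
    rw [h2]
    calc _ = D.lam • (b' * (D.e1 * D.e2 * D.e1) * D.w * b) := by
          simp only [smul_mul_assoc, mul_assoc]
      _ = _ := by
          rw [D.hbraid1]
          simp only [smul_mul_assoc, mul_smul_comm, mul_assoc, smul_smul, pow_two]
  rw [pr, h3, map_smul, D.hT_tr, mul_assoc, smul_eq_mul] at ha
  have h4 := D.T_K (D.w * b * b')
  rw [D.K_inB_self ((D.inB_w.mul hb).mul hb')] at h4
  rw [h4]
  have : D.T (D.e1 * (D.w * b * b')) = 0 := by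
    simpa [hl] using ha
  rw [this, mul_zero]

/-! ### The action of `B` on `M₁` -/

lemma pr_eq_act (a b : R) : D.pr a b = D.T (D.K (D.w * D.act b a)) := by
  rw [T_K, pr, act]
  have h : D.e1 * D.w ∈ D.M1 := D.M1.mul_mem D.he1_mem D.hw_mem.1
  rw [mul_smul_comm, mul_smul_comm, ← mul_assoc, map_smul, ← D.hEM1_left _ h, D.hTEM1]
  have : D.T (a * D.e2 * D.e1 * D.w * b) = D.T (D.e1 * D.w * (b * a * D.e2)) := by
    calc _ = D.T ((a * D.e2) * (D.e1 * D.w * b)) := by simp only [mul_assoc]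
      _ = _ := by rw [D.hT_tr]; simp only [mul_assoc]
  rw [this, smul_eq_mul]; ring

lemma act_mem (b x : R) : D.act b x ∈ D.M1 := D.M1.smul_mem (D.hEM1_mem _) _

lemma act_inC {b x : R} (hb : D.InB b) (hx : D.InC x) : D.InC (D.act b x) :=
  (D.inC_EM1 ((hb.inC.mul hx).mul D.inC_e2)).smul _

lemma act_act (b b' x : R) : D.act b (D.act b' x) = D.act (b * b') x := by
  have h := D.hPP2 (b' * x)
  have : b * D.lam⁻¹ • D.EM1 (b' * x * D.e2) * D.e2 = b * b' * x * D.e2 := by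
    rw [mul_smul_comm, smul_mul_assoc, mul_assoc b, ← mul_smul_comm, ← h]
    simp only [mul_assoc]
  simp only [act]
  rw [this]

lemma pr_act (a b b' : R) : D.pr (D.act b a) b' = D.pr a (b' * b) := by
  rw [pr_eq_act, pr_eq_act, act_act]

lemma act_mul_right {m : R} (hm : m ∈ D.M) (b x : R) : D.act b (x * m) = D.act b x * m := by
  simp only [act]
  rw [smul_mul_assoc, ← D.hEM1_right m (D.hMM1 hm)]
  congr 2
  simp only [mul_assoc, D.he2_M m hm]

lemma act_mul_left {m : R} (hm : m ∈ D.M) {b : R} (hb : D.InB b) (x : R) :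
    D.act b (m * x) = m * D.act b x := by
  simp only [act]
  rw [mul_smul_comm, ← D.hEM1_left m (D.hMM1 hm)]
  congr 2
  rw [← mul_assoc, hb m hm]
  simp only [mul_assoc]

lemma act_sum {ι : Type*} (s : Finset ι) (b : R) (x : ι → R) :
    D.act b (∑ i ∈ s, x i) = ∑ i ∈ s, D.act b (x i) := by
  simp only [act, Finset.mul_sum, Finset.sum_mul, map_sum, Finset.smul_sum]

/-! ### The map `V → U` -/

/-- The anti-homomorphism `V → U`, `ṽ = λ⁻¹ E_M(e₁ v)`, characterized by `e₁ ṽ = e₁ v`. -/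
def til (v : R) : R := D.lam⁻¹ • D.EM (D.e1 * v)

lemma til_mem {v : R} (h1 : v ∈ D.M1) : D.til v ∈ D.M :=
  D.M.smul_mem (D.hEM_mem _ (D.M1.mul_mem D.he1_mem h1)) _

lemma til_inC {v : R} (h1 : v ∈ D.M1) (hv : D.InB v) : D.InC (D.til v) :=
  (D.inC_EM (D.M1.mul_mem D.he1_mem h1) (D.inC_e1.mul hv.inC)).smul _

lemma e1_til {v : R} (h1 : v ∈ D.M1) : D.e1 * D.til v = D.e1 * v := by
  rw [til, mul_smul_comm, ← D.hPP1' v h1]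

/-- Right multiplication by `ṽ ∈ U` becomes left multiplication by `v ∈ V` under `K`. -/
lemma K_til {v c : R} (h1 : v ∈ D.M1) (hv : D.InB v) (hc : D.InC c) :
    D.K (c * D.til v) = v * D.K c := by
  have hB := D.K_inB hc
  rw [← D.K_inB_self (hv.mul hB)]
  apply D.K_congr
  rw [← mul_assoc, ← D.e1_K hc, mul_assoc, hB _ (D.til_mem h1), ← mul_assoc, D.e1_til h1,
    mul_assoc]

/-! ### The commutation relation -/

/-- The slices of a comultiplication: `⟨a, b₍₁₎⟩ b₍₂₎ = w⁻¹ K(w b a)`, since both sides have the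
same pairing with `A`. -/
lemma slice {m : ℕ} {b : R} (hb : D.InB b) {b1 b2 : Fin m → R} (h2 : ∀ i, D.InB (b2 i))
    (hΔ : D.Δ b = ∑ i, b1 i ⊗ₜ[k] b2 i) {a : R} (ha1 : a ∈ D.M1) (ha : D.InC a) :
    ∑ i, D.pr a (b1 i) • b2 i = D.winv * D.K (D.w * b * a) := by
  have hc : D.InC (D.w * b * a) := (D.inB_w.mul hb).inC.mul ha
  rw [← sub_eq_zero]
  have hL : D.InB (∑ i, D.pr a (b1 i) • b2 i) := by
    intro y hy
    simp only [Finset.sum_mul, Finset.mul_sum, smul_mul_assoc, mul_smul_comm]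
    exact Finset.sum_congr rfl fun i _ => by rw [h2 i y hy]
  have hR : D.InB (D.winv * D.K (D.w * b * a)) := D.inB_winv.mul (D.K_inB hc)
  refine D.pr_nondeg (fun y hy => by rw [sub_mul, mul_sub, hL y hy, hR y hy]) ?_
  intro a2 ha21 ha2
  have e := D.hΔ_def a ha1 ha a2 ha21 ha2 b hb m b1 b2 hΔ
  have e1 : D.pr a2 (∑ i, D.pr a (b1 i) • b2 i) = D.pr (a * a2) b := by
    simp only [pr] at e ⊢
    rw [← e]
    simp only [Finset.mul_sum, mul_smul_comm, map_sum, map_smul, smul_eq_mul]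
    exact Finset.sum_congr rfl fun i _ => by ring
  have e2 : D.pr a2 (D.winv * D.K (D.w * b * a)) = D.pr (a * a2) b := by
    simp only [pr]
    congr 1
    calc D.T (a2 * D.e2 * D.e1 * D.w * (D.winv * D.K (D.w * b * a)))
        = D.T (a2 * D.e2 * (D.e1 * (D.w * D.winv * D.K (D.w * b * a)))) := by
          simp only [mul_assoc]
      _ = D.T ((a2 * D.e2 * D.e1 * D.w * b) * a) := by
          rw [D.hw_inv.1, one_mul, D.e1_K hc]; simp only [mul_assoc]
      _ = _ := by rw [D.hT_tr]; simp only [mul_assoc]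
  have : ∀ x y : R, D.pr a2 (x - y) = D.pr a2 x - D.pr a2 y := by
    intro x y; simp only [pr, mul_sub, map_sub]
  rw [this, e1, e2, sub_self]

/-- The commutation relation of `A` and `B` after left multiplication by `e₁ w`. Applying `slice`
to `a ṽ` determines `T(v K(w (b₍₁₎ ▷ a))) b₍₂₎` for all `v ∈ V`, and the dual bases of `T` on `V`
recover `K(w (b₍₁₎ ▷ a)) b₍₂₎`. -/
lemma e1_comm {m : ℕ} {b : R} (hb : D.InB b) {b1 b2 : Fin m → R} (h1 : ∀ i, D.InB (b1 i))
    (h2 : ∀ i, D.InB (b2 i))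
    (hΔ : D.Δ b = ∑ i, b1 i ⊗ₜ[k] b2 i) {a : R} (ha1 : a ∈ D.M1) (ha : D.InC a) :
    ∑ i, D.e1 * D.w * D.act (b1 i) a * b2 i = D.e1 * D.w * b * a := by
  have hc : D.InC (D.w * b * a) := (D.inB_w.mul hb).inC.mul ha
  have hci : ∀ i, D.InC (D.w * D.act (b1 i) a) := fun i =>
    D.inB_w.inC.mul (D.act_inC (h1 i) ha)
  have hV : ∀ v ∈ D.M1, D.InB v →
      ∑ i, D.T (v * D.K (D.w * D.act (b1 i) a)) • b2 i
        = D.winv * (v * D.K (D.w * b * a)) := by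
    intro v hv1 hv
    have hs := D.slice hb h2 hΔ (D.M1.mul_mem ha1 (D.hMM1 (D.til_mem hv1)))
      (ha.mul (D.til_inC hv1 hv))
    rw [← mul_assoc, D.K_til hv1 hv hc] at hs
    rw [← hs]
    refine Finset.sum_congr rfl fun i _ => ?_
    rw [pr_eq_act, D.act_mul_right (D.til_mem hv1), ← mul_assoc, D.K_til hv1 hv (hci i)]
  have key : ∑ i, D.K (D.w * D.act (b1 i) a) * b2 i = D.K (D.w * b * a) := by
    calc ∑ i, D.K (D.w * D.act (b1 i) a) * b2 i
        = ∑ i, ∑ j, D.f1 j * (D.T (D.w * D.f2 j * D.K (D.w * D.act (b1 i) a)) • b2 i) := by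
          refine Finset.sum_congr rfl fun i _ => ?_
          conv_lhs => rw [← D.hw_dual (D.K (D.w * D.act (b1 i) a))
            (D.K_mem_M1 (D.M1.mul_mem D.hw_mem.1 (D.act_mem _ _))) (D.K_inB (hci i))]
          rw [Finset.sum_mul]
          refine Finset.sum_congr rfl fun j _ => ?_
          rw [D.hT_tr, smul_mul_assoc, mul_smul_comm]
      _ = ∑ j, D.f1 j * (D.winv * (D.w * D.f2 j * D.K (D.w * b * a))) := by
          rw [Finset.sum_comm]
          refine Finset.sum_congr rfl fun j _ => ?_
          rw [← Finset.mul_sum, hV _ (D.M1.mul_mem D.hw_mem.1 (D.hf2 j).1)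
            (D.inB_w.mul (D.hf2 j).2)]
      _ = ∑ j, D.f1 j * D.f2 j * D.K (D.w * b * a) := by
          refine Finset.sum_congr rfl fun j _ => ?_
          rw [mul_assoc D.w, ← mul_assoc D.winv, D.hw_inv.2, one_mul, ← mul_assoc]
      _ = D.K (D.w * b * a) := by rw [← Finset.sum_mul, D.hf_one, one_mul]
  have := congrArg (D.e1 * ·) key
  simp only [Finset.mul_sum] at this
  rw [D.e1_K hc] at this
  rw [← mul_assoc, ← mul_assoc] at this
  rw [← this]
  refine Finset.sum_congr rfl fun i _ => ?_
  rw [← mul_assoc, D.e1_K (hci i)]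
  simp only [mul_assoc]

/-- The commutation relation `b a = (b₍₁₎ ▷ a) b₍₂₎` for `a ∈ M₁`, `b ∈ B`. As `M₁ = A M` by depth
two, `e1_comm` extends from `A` to `M₁`; applied to `m a` it gives the relation multiplied on the
left by `e₁ m w`, for every `m ∈ M`, and `∑ xⱼ e₁ yⱼ = 1`. -/
lemma comm_rel {m : ℕ} {b : R} (hb : D.InB b) {b1 b2 : Fin m → R} (h1 : ∀ i, D.InB (b1 i))
    (h2 : ∀ i, D.InB (b2 i))
    (hΔ : D.Δ b = ∑ i, b1 i ⊗ₜ[k] b2 i) {a : R} (ha1 : a ∈ D.M1) :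
    ∑ i, D.act (b1 i) a * b2 i = b * a := by
  have hx : ∀ x ∈ D.M1, ∑ i, D.e1 * D.w * D.act (b1 i) x * b2 i = D.e1 * D.w * b * x := by
    intro x hx
    rw [← D.hdualA2 x hx, Finset.mul_sum]
    simp only [act_sum, Finset.mul_sum, Finset.sum_mul]
    rw [Finset.sum_comm]
    refine Finset.sum_congr rfl fun j _ => ?_
    have hm : D.EM (D.wb j * x) ∈ D.M := D.hEM_mem _ (D.M1.mul_mem (D.hwb j).1 hx)
    rw [← mul_assoc, ← D.e1_comm hb h1 h2 hΔ (D.hzb j).1 (D.hzb j).2, Finset.sum_mul]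
    refine Finset.sum_congr rfl fun i _ => ?_
    rw [D.act_mul_right hm, mul_assoc _ (b2 i), h2 i _ hm]
    simp only [mul_assoc]
  have hm : ∀ m ∈ D.M, D.e1 * m * (D.w * ∑ i, D.act (b1 i) a * b2 i)
      = D.e1 * m * (D.w * (b * a)) := by
    intro m hm
    have h := hx (m * a) (D.M1.mul_mem (D.hMM1 hm) ha1)
    calc _ = ∑ i, D.e1 * D.w * D.act (b1 i) (m * a) * b2 i := by
          simp only [Finset.mul_sum]
          refine Finset.sum_congr rfl fun i _ => ?_
          rw [D.act_mul_left hm (h1 i), mul_assoc D.e1 m, ← mul_assoc m, ← D.inB_w m hm]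
          simp only [mul_assoc]
      _ = D.e1 * (D.w * (b * m)) * a := by rw [h]; simp only [mul_assoc]
      _ = D.e1 * (D.w * m) * b * a := by rw [hb m hm]; simp only [mul_assoc]
      _ = _ := by rw [D.inB_w m hm]; simp only [mul_assoc]
  have hw : D.w * (∑ i, D.act (b1 i) a * b2 i - b * a) = 0 := by
    rw [mul_sub, sub_eq_zero, ← one_mul (D.w * _), ← one_mul (D.w * (b * a)), ← D.sum_e1,
      Finset.sum_mul, Finset.sum_mul]
    refine Finset.sum_congr rfl fun j _ => ?_
    rw [mul_assoc (D.xb j), mul_assoc (D.xb j), mul_assoc (D.xb j), hm _ (D.hyb j)]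
  exact sub_eq_zero.1 (D.w_cancel hw)

/-- The action of `B` on `M₁` satisfies the module algebra law. -/
lemma act_mul {m : ℕ} {b : R} (hb : D.InB b) {b1 b2 : Fin m → R} (h1 : ∀ i, D.InB (b1 i))
    (h2 : ∀ i, D.InB (b2 i))
    (hΔ : D.Δ b = ∑ i, b1 i ⊗ₜ[k] b2 i) {a : R} (ha1 : a ∈ D.M1) (a' : R) :
    D.act b (a * a') = ∑ i, D.act (b1 i) a * D.act (b2 i) a' := by
  conv_lhs => rw [act, ← mul_assoc, ← D.comm_rel hb h1 h2 hΔ ha1]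
  rw [Finset.sum_mul, Finset.sum_mul, map_sum, Finset.smul_sum]
  refine Finset.sum_congr rfl fun i _ => ?_
  rw [mul_assoc, mul_assoc, D.hEM1_left _ (D.act_mem _ _), ← mul_smul_comm, ← mul_assoc, ← act]

/-! ### Separation of points of `B ⊗ B` -/

/-- The pairing `⟨a, ·⟩` as a linear functional. -/
def prL (a : R) : R →ₗ[k] k :=
  D.lam⁻¹ ^ 2 • (D.T ∘ₗ LinearMap.mulLeft k (a * D.e2 * D.e1 * D.w))

lemma prL_apply (a b : R) : D.prL a b = D.pr a b := by
  simp [prL, pr, mul_assoc]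

/-- The functional `⟨a₁, ·⟩ ⊗ ⟨a₂, ·⟩`. -/
noncomputable def prT (a1 a2 : R) : R ⊗[k] R →ₗ[k] k :=
  LinearMap.mul' k k ∘ₗ TensorProduct.map (D.prL a1) (D.prL a2)

lemma prT_tmul (a1 a2 b1 b2 : R) :
    D.prT a1 a2 (b1 ⊗ₜ[k] b2) = D.pr a1 b1 * D.pr a2 b2 := by
  simp [prT, prL_apply]

lemma mem_B {x : R} : x ∈ D2.B D.toD2S.toD2 ↔ D.InB x := by
  rw [D2.B, Subalgebra.mem_centralizer_iff]
  exact ⟨fun h y hy => (h y hy).symm, fun h y hy => (h y hy).symm⟩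

/-- The pairing of `A ⊗ A` with `B ⊗ B` separates the points of `B ⊗ B`. -/
lemma prT_nondeg (t : D2.B D.toD2S.toD2 ⊗[k] D2.B D.toD2S.toD2)
    (h : ∀ a1 ∈ D.M1, D.InC a1 → ∀ a2 ∈ D.M1, D.InC a2 →
      D.prT a1 a2 (TensorProduct.map (D2.B D.toD2S.toD2).val.toLinearMap
        (D2.B D.toD2S.toD2).val.toLinearMap t) = 0) : t = 0 := by
  set e := Module.Basis.ofVectorSpace k (D2.B D.toD2S.toD2)
  obtain ⟨c, rfl⟩ := TensorProduct.eq_repr_basis_right e t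
  suffices hc : c = 0 by simp [hc]
  ext i
  have key : ∀ a1 ∈ D.M1, D.InC a1 → ∑ j ∈ c.support, D.pr a1 (c j) • e j = 0 := by
    intro a1 ha11 ha1
    apply Subtype.ext
    refine D.pr_nondeg (D.mem_B.1 (Subtype.mem _)) fun a2 ha21 ha2 => ?_
    have := h a1 ha11 ha1 a2 ha21 ha2
    simp only [Finsupp.sum, map_sum, TensorProduct.map_tmul, prT_tmul] at this
    rw [← prL_apply]
    simpa [prL_apply] using this
  have hz : (c i : R) = 0 := by
    refine D.pr_nondeg (D.mem_B.1 (c i).2) fun a1 ha11 ha1 => ?_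
    by_cases hi : i ∈ c.support
    · exact linearIndependent_iff'.1 e.linearIndependent _ _ (key a1 ha11 ha1) i hi
    · simp [Finsupp.notMem_support_iff.1 hi, pr]
  simpa using hz

lemma exists_rep {b : R} (hb : D.InB b) : ∃ (m : ℕ) (b1 b2 : Fin m → R),
    (∀ i, D.InB (b1 i)) ∧ (∀ i, D.InB (b2 i)) ∧ D.Δ b = ∑ i, b1 i ⊗ₜ[k] b2 i := by
  obtain ⟨n, f, g, hfg⟩ := Submodule.mem_span_set'.1 (D.hΔ_mem b hb)
  choose b1 h1 b2 h2 hg using fun i => (g i).2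
  refine ⟨n, fun i => f i • b1 i, b2, fun i y hy => ?_, h2, ?_⟩
  · rw [smul_mul_assoc, mul_smul_comm, h1 i y hy]
  · rw [← hfg]
    exact Finset.sum_congr rfl fun i _ => by rw [hg i, TensorProduct.smul_tmul']

lemma prT_Δ {b : R} (hb : D.InB b) {a1 a2 : R} (ha11 : a1 ∈ D.M1) (ha1 : D.InC a1)
    (ha21 : a2 ∈ D.M1) (ha2 : D.InC a2) : D.prT a1 a2 (D.Δ b) = D.pr (a1 * a2) b := by
  obtain ⟨m, b1, b2, -, -, hΔ⟩ := D.exists_rep hb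
  rw [hΔ, map_sum]
  simp only [prT_tmul]
  exact D.hΔ_def a1 ha11 ha1 a2 ha21 ha2 b hb m b1 b2 hΔ

lemma exists_lift {m : ℕ} {b1 b2 : Fin m → R} (h1 : ∀ i, D.InB (b1 i)) (h2 : ∀ i, D.InB (b2 i)) :
    ∃ t : D2.B D.toD2S.toD2 ⊗[k] D2.B D.toD2S.toD2,
      TensorProduct.map (D2.B D.toD2S.toD2).val.toLinearMap
        (D2.B D.toD2S.toD2).val.toLinearMap t = ∑ i, b1 i ⊗ₜ[k] b2 i := by
  refine ⟨∑ i, (⟨b1 i, D.mem_B.2 (h1 i)⟩ : D2.B D.toD2S.toD2) ⊗ₜ[k]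
    (⟨b2 i, D.mem_B.2 (h2 i)⟩ : D2.B D.toD2S.toD2), ?_⟩
  simp

lemma pr_sum {ι : Type*} (s : Finset ι) (b : R) (x : ι → R) :
    D.pr (∑ i ∈ s, x i) b = ∑ i ∈ s, D.pr (x i) b := by
  simp only [pr, Finset.sum_mul, map_sum, Finset.mul_sum]

end D2H

/-! ### Multiplicativity of the comultiplication -/

/-- `Δ` is an algebra homomorphism: `Δ(b b') = Δ(b) Δ(b')` for all
`b, b' ∈ B`, where `B ⊗ B ⊆ R ⊗ R` carries the componentwise product. -/
theorem stmt12 {k : Type*} [Field k] {R : Type*} [Ring R] [Algebra k R] (D : D2H k R) :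
    ∀ b ∈ D2.B D.toD2S.toD2, ∀ b' ∈ D2.B D.toD2S.toD2,
      D.Δ (b * b') = D.Δ b * D.Δ b' := by
  intro b hb b' hb'
  rw [D.mem_B] at hb hb'
  obtain ⟨m, b1, b2, h1, h2, hΔ⟩ := D.exists_rep hb
  obtain ⟨m', b1', b2', h1', h2', hΔ'⟩ := D.exists_rep hb'
  obtain ⟨m'', b1'', b2'', h1'', h2'', hΔ''⟩ := D.exists_rep (hb.mul hb')
  have hprod : D.Δ b * D.Δ b' = ∑ j, ∑ i, (b1 i * b1' j) ⊗ₜ[k] (b2 i * b2' j) := by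
    rw [hΔ, hΔ', Finset.mul_sum]
    simp only [Finset.sum_mul, Algebra.TensorProduct.tmul_mul_tmul]
  obtain ⟨t, ht⟩ := D.exists_lift h1'' h2''
  choose s hs using fun j : Fin m' => D.exists_lift (fun i => (h1 i).mul (h1' j))
    (fun i => (h2 i).mul (h2' j))
  have hts : t - ∑ j, s j = 0 := by
    refine D.prT_nondeg _ fun a1 ha11 ha1 a2 ha21 ha2 => ?_
    rw [map_sub, map_sum, ht, ← hΔ'', map_sub, D.prT_Δ (hb.mul hb') ha11 ha1 ha21 ha2,
      sub_eq_zero, ← D.pr_act, D.act_mul hb' h1' h2' hΔ' ha11, D.pr_sum, map_sum]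
    refine Finset.sum_congr rfl fun j _ => ?_
    rw [← D.prT_Δ hb (D.act_mem _ _) (D.act_inC (h1' j) ha1) (D.act_mem _ _)
      (D.act_inC (h2' j) ha2), hs, hΔ, map_sum, map_sum]
    simp only [D.prT_tmul, D.pr_act]
  rw [hprod, hΔ'', ← ht, sub_eq_zero.1 hts, map_sum]
  exact Finset.sum_congr rfl fun j _ => hs j
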